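/- Let p be an odd prime, let d be a positive integer with d > (p−1)/2, and let ρ₁, ρ₂, …, ρ_{(p−1)/2} be metrics on ℝᵈ each of which induces the standard (Euclidean) topology of ℝᵈ. Then there exist p distinct points x₀, x₁, …, x_{p−1} in ℝᵈ, indexed by 𝔽_p, such that for every t ∈ {1, 2, …, (p−1)/2} the p-gon C_t is ρ_t-equilateral. -/

import Mathlib

/-- `ρ` is a metric on `E` that induces the (given) standard topology of `E`. -/
def IsMetricEquivToStd {E : Type*} [TopologicalSpace E] (ρ : E → E → ℝ) : Prop :=
  (∀ x y, ρ x y = ρ y x) ∧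
  (∀ x y, ρ x y = 0 ↔ x = y) ∧
  (∀ x y z, ρ x z ≤ ρ x y + ρ y z) ∧
  (∀ s : Set E, IsOpen s ↔ ∀ x ∈ s, ∃ ε > 0, {y | ρ x y < ε} ⊆ s)

section Chains

variable {R : Type*} [CommRing R] {E : Type*}

/-- Prepending a vertex to every list of a chain. -/
noncomputable def consChain (x : E) : (List E →₀ R) →ₗ[R] (List E →₀ R) :=
  Finsupp.lmapDomain R R (List.cons x)

/-- The (augmented) simplicial boundary of a list of vertices. -/
noncomputable def listBoundary : List E → (List E →₀ R)
  | [] => 0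
  | x :: l => Finsupp.single l 1 - consChain x (listBoundary l)

/-- The boundary operator of the augmented complex of ordered chains. -/
noncomputable def chainBoundary : (List E →₀ R) →ₗ[R] (List E →₀ R) :=
  Finsupp.linearCombination R listBoundary

/-- The chain map induced by a map of vertices. -/
noncomputable def chainMap (f : E → E) : (List E →₀ R) →ₗ[R] (List E →₀ R) :=
  Finsupp.lmapDomain R R (List.map f)

/-- The prism over a list of vertices, joining its images under `f` and `g`. -/
noncomputable def listPrism (f g : E → E) : List E → (List E →₀ R)
  | [] => 0
  | x :: l => consChain (f x) (Finsupp.single (g x :: l.map g) 1) -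
      consChain (f x) (listPrism f g l)

/-- The prism operator, a chain homotopy from `chainMap f` to `chainMap g`. -/
noncomputable def chainPrism (f g : E → E) : (List E →₀ R) →ₗ[R] (List E →₀ R) :=
  Finsupp.linearCombination R (listPrism f g)

@[simp] lemma consChain_single (x : E) (l : List E) (r : R) :
    consChain x (Finsupp.single l r) = Finsupp.single (x :: l) r := by
  simp [consChain]

@[simp] lemma chainBoundary_single (l : List E) :
    chainBoundary (Finsupp.single l (1 : R)) = listBoundary l := by
  simp [chainBoundary]

@[simp] lemma chainMap_single (f : E → E) (l : List E) (r : R) :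
    chainMap f (Finsupp.single l r) = Finsupp.single (l.map f) r := by
  simp [chainMap]

@[simp] lemma chainPrism_single (f g : E → E) (l : List E) :
    chainPrism f g (Finsupp.single l (1 : R)) = listPrism f g l := by
  simp [chainPrism]

/-- Linear maps on chains agree if they agree on lists. -/
lemma chain_hom_ext {M : Type*} [AddCommGroup M] [Module R M] {φ ψ : (List E →₀ R) →ₗ[R] M}
    (h : ∀ l, φ (Finsupp.single l 1) = ψ (Finsupp.single l 1)) (c : List E →₀ R) :
    φ c = ψ c := by
  have : φ = ψ := Finsupp.lhom_ext' fun l => LinearMap.ext_ring (h l)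
  rw [this]

lemma chainBoundary_consChain (x : E) (c : List E →₀ R) :
    chainBoundary (consChain x c) = c - consChain x (chainBoundary c) :=
  chain_hom_ext (φ := chainBoundary ∘ₗ consChain x)
    (ψ := LinearMap.id - consChain x ∘ₗ chainBoundary) (fun l => by simp [listBoundary]) c

lemma chainMap_consChain (f : E → E) (x : E) (c : List E →₀ R) :
    chainMap f (consChain x c) = consChain (f x) (chainMap f c) :=
  chain_hom_ext (φ := chainMap f ∘ₗ consChain x)
    (ψ := consChain (f x) ∘ₗ chainMap f) (fun l => by simp) c

lemma chainBoundary_chainMap (f : E → E) (c : List E →₀ R) :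
    chainBoundary (chainMap f c) = chainMap f (chainBoundary c) := by
  refine chain_hom_ext (φ := chainBoundary ∘ₗ chainMap f)
    (ψ := chainMap f ∘ₗ chainBoundary) (fun l => ?_) c
  induction l with
  | nil => simp [listBoundary]
  | cons x l ih =>
    simp only [LinearMap.comp_apply, chainMap_single, chainBoundary_single] at ih
    simp [listBoundary, chainMap_consChain, ih]

lemma chainPrism_consChain (f g : E → E) (x : E) (c : List E →₀ R) :
    chainPrism f g (consChain x c) =
      consChain (f x) (consChain (g x) (chainMap g c)) - consChain (f x) (chainPrism f g c) :=
  chain_hom_ext (φ := chainPrism f g ∘ₗ consChain x)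
    (ψ := consChain (f x) ∘ₗ consChain (g x) ∘ₗ chainMap g - consChain (f x) ∘ₗ chainPrism f g)
    (fun l => by simp [listPrism]) c

lemma chainBoundary_chainPrism (f g : E → E) (c : List E →₀ R) :
    chainBoundary (chainPrism f g c) =
      chainMap g c - chainMap f c - chainPrism f g (chainBoundary c) := by
  refine chain_hom_ext (φ := chainBoundary ∘ₗ chainPrism f g)
    (ψ := chainMap g - chainMap f - chainPrism f g ∘ₗ chainBoundary) (fun l => ?_) c
  induction l with
  | nil => simp [listBoundary, listPrism]
  | cons x l ih =>
    have hg := chainBoundary_chainMap (R := R) g (Finsupp.single l 1)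
    simp only [LinearMap.comp_apply, LinearMap.sub_apply, chainMap_single, chainPrism_single,
      chainBoundary_single] at ih hg
    simp only [LinearMap.comp_apply, LinearMap.sub_apply, chainMap_single, chainPrism_single,
      chainBoundary_single, listPrism, listBoundary, map_sub, chainBoundary_consChain,
      chainPrism_consChain, hg, ih, List.map_cons, consChain_single]
    abel

end Chains

section Cochains

variable {R : Type*} [CommRing R] {L : Type*}

/-- Restriction of a function to the lists with a given head. -/
def restrictHead (a : L) (c : List L → R) : List L → R := fun l => c (a :: l)

/-- The boundary of an alternating function on lists, summing over the first entry. -/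
def altBoundary [Fintype L] : (List L → R) →ₗ[R] (List L → R) where
  toFun c l := ∑ a, c (a :: l)
  map_add' c c' := by ext l; simp [Finset.sum_add_distrib]
  map_smul' r c := by ext l; simp [Finset.mul_sum]

/-- Relabelling of functions on lists along a permutation of the labels. -/
def relabel (e : Equiv.Perm L) : Module.End R (List L → R) :=
  LinearMap.funLeft R R (List.map e.symm)

lemma altBoundary_relabel [Fintype L] (e : Equiv.Perm L) (c : List L → R) :
    altBoundary (relabel e c) = relabel e (altBoundary c) := by
  ext l
  simpa [altBoundary, relabel, LinearMap.funLeft] using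
    Equiv.sum_comp e.symm fun a => c (a :: l.map e.symm)

/-- Functions on lists that change sign when two adjacent entries are exchanged. -/
def IsAlt (c : List L → R) : Prop :=
  ∀ u a b v, c (u ++ a :: b :: v) = -c (u ++ b :: a :: v)

lemma IsAlt.restrictHead {c : List L → R} (hc : IsAlt c) (a : L) : IsAlt (restrictHead a c) :=
  fun u => hc (a :: u)

lemma IsAlt.eq_or_eq_neg {c : List L → R} (hc : IsAlt c) {l l' : List L} (h : l.Perm l') :
    c l = c l' ∨ c l = -c l' := by
  induction h generalizing c with
  | nil => simp
  | cons x h ih => exact ih (hc.restrictHead x)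
  | swap x y l => exact Or.inr (hc [] y x l)
  | trans h₁ h₂ ih₁ ih₂ =>
    rcases ih₁ hc with h₁ | h₁ <;> rcases ih₂ hc with h₂ | h₂ <;> simp [h₁, h₂]

lemma IsAlt.nodup {c : List L → R} (hc : IsAlt c) (h2 : IsUnit (2 : R)) {l : List L}
    (hl : c l ≠ 0) : l.Nodup := by
  rw [List.nodup_iff_sublist]
  intro a ha
  obtain ⟨v, hv⟩ := ha.exists_perm_append
  have h0 : c (a :: a :: v) = 0 := by
    have := hc [] a a v
    rw [← h2.mul_right_eq_zero]
    simp only [List.nil_append] at this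
    linear_combination this
  have := hc.eq_or_eq_neg hv
  simp_all

lemma IsAlt.altBoundary_altBoundary [Fintype L] {c : List L → R} (hc : IsAlt c)
    (h2 : IsUnit (2 : R)) : altBoundary (altBoundary c) = 0 := by
  ext l
  rw [Pi.zero_apply, ← h2.mul_right_eq_zero]
  have h : altBoundary (altBoundary c) l = -altBoundary (altBoundary c) l := by
    simp only [altBoundary, LinearMap.coe_mk, AddHom.coe_mk]
    conv_lhs => rw [Finset.sum_comm]
    simp only [← Finset.sum_neg_distrib]
    exact Finset.sum_congr rfl fun a _ => Finset.sum_congr rfl fun b _ => hc [] a b l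
  linear_combination h

variable [DecidableEq L]

/-- The exterior product with the vertex `x`, evaluated on lists. -/
def wedgeFun (x : L) : List L → (List L → R) → R
  | [], _ => 0
  | a :: l, c => (if a = x then c l else 0) - wedgeFun x l (restrictHead a c)

/-- The exterior product with the vertex `x`. -/
def wedge (x : L) : Module.End R (List L → R) where
  toFun c l := wedgeFun x l c
  map_add' c c' := by
    ext l
    simp only [Pi.add_apply]
    induction l generalizing c c' with
    | nil => simp [wedgeFun]
    | cons a l ih =>
      have := ih (restrictHead a c) (restrictHead a c')
      simp only [wedgeFun, Pi.add_apply]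
      erw [this]
      split_ifs <;> ring
  map_smul' r c := by
    ext l
    simp only [Pi.smul_apply, RingHom.id_apply, smul_eq_mul]
    induction l generalizing c with
    | nil => simp [wedgeFun]
    | cons a l ih =>
      have := ih (restrictHead a c)
      simp only [wedgeFun, Pi.smul_apply, smul_eq_mul]
      erw [this]
      split_ifs <;> ring

@[simp] lemma wedge_nil (x : L) (c : List L → R) : wedge x c [] = 0 := rfl

lemma wedge_cons (x a : L) (l : List L) (c : List L → R) :
    wedge x c (a :: l) = (if a = x then c l else 0) - wedge x (restrictHead a c) l := rfl

lemma altBoundary_wedge [Fintype L] (x : L) (c : List L → R) :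
    altBoundary (wedge x c) = c - wedge x (altBoundary c) := by
  have h : altBoundary c = ∑ a, restrictHead a c := by
    ext l; simp [altBoundary, restrictHead]
  ext l
  simp only [h, map_sum, Pi.sub_apply, Finset.sum_apply]
  simp [altBoundary, wedge_cons]

lemma wedge_relabel (e : Equiv.Perm L) (x : L) (c : List L → R) :
    wedge (e x) (relabel e c) = relabel e (wedge x c) := by
  ext l
  change _ = wedge x c (l.map e.symm)
  induction l generalizing c with
  | nil => simp
  | cons a l ih =>
    simp only [wedge_cons, List.map_cons, Equiv.symm_apply_eq]
    rw [← ih]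
    rfl

/-- The alternating function dual to a list of labels. -/
def dualList : List L → (List L → R)
  | [] => Pi.single [] 1
  | x :: l => wedge x (dualList l)

/-- The chain map from ordered chains to alternating functions induced by a labelling. -/
noncomputable def labelChain {E : Type*} (lam : E → L) : (List E →₀ R) →ₗ[R] (List L → R) :=
  Finsupp.linearCombination R fun l => dualList (l.map lam)

@[simp] lemma labelChain_single {E : Type*} (lam : E → L) (l : List E) :
    labelChain lam (Finsupp.single l (1 : R)) = dualList (l.map lam) := by
  simp [labelChain]

lemma labelChain_consChain {E : Type*} (lam : E → L) (x : E) (c : List E →₀ R) :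
    labelChain lam (consChain x c) = wedge (lam x) (labelChain lam c) :=
  chain_hom_ext (φ := labelChain lam ∘ₗ consChain x)
    (ψ := wedge (lam x) ∘ₗ labelChain lam) (fun l => by simp [dualList]) c

lemma altBoundary_labelChain [Fintype L] {E : Type*} (lam : E → L) (c : List E →₀ R) :
    altBoundary (labelChain lam c) = labelChain lam (chainBoundary c) := by
  refine chain_hom_ext (φ := altBoundary ∘ₗ labelChain lam)
    (ψ := labelChain lam ∘ₗ chainBoundary) (fun l => ?_) c
  induction l with
  | nil =>
    ext l
    simp [listBoundary, dualList, altBoundary]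
  | cons x l ih =>
    simp only [LinearMap.comp_apply, labelChain_single, chainBoundary_single] at ih
    simp [listBoundary, labelChain_consChain, dualList, altBoundary_wedge, ih]

lemma dualList_relabel (e : Equiv.Perm L) (l : List L) :
    dualList (R := R) (l.map e) = relabel e (dualList l) := by
  induction l with
  | nil =>
    ext l
    cases l <;> simp [dualList, relabel, LinearMap.funLeft]
  | cons x l ih => simp [dualList, ih, wedge_relabel]

lemma IsAlt.wedge {c : List L → R} (hc : IsAlt c) (x : L) : IsAlt (wedge x c) := by
  intro u a b v
  induction u generalizing c with
  | nil =>
    have h : _root_.restrictHead b (_root_.restrictHead a c) =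
        -_root_.restrictHead a (_root_.restrictHead b c) := funext fun l => hc [] a b l
    simp only [List.nil_append, wedge_cons, h, map_neg, Pi.neg_apply]
    simp only [_root_.restrictHead]
    ring
  | cons e u ih =>
    simp only [List.cons_append, wedge_cons, ih (hc.restrictHead e), hc u a b v]
    split_ifs <;> ring

lemma isAlt_dualList (l : List L) : IsAlt (dualList (R := R) l) := by
  induction l with
  | nil => intro u a b v; simp [dualList]
  | cons x l ih => exact ih.wedge x

lemma exists_perm_of_wedge_ne_zero {x : L} {c : List L → R} {l : List L} (h : wedge x c l ≠ 0) :
    ∃ l', l.Perm (x :: l') ∧ c l' ≠ 0 := by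
  induction l generalizing c with
  | nil => simp at h
  | cons a l ih =>
    rw [wedge_cons] at h
    by_cases ha : a = x ∧ c l ≠ 0
    · exact ⟨l, by rw [ha.1], ha.2⟩
    · have h' : wedge x (restrictHead a c) l ≠ 0 := by
        intro h0
        apply h
        rw [h0]
        grind
      obtain ⟨l', hl, hc⟩ := ih h'
      exact ⟨a :: l', (hl.cons a).trans (List.Perm.swap _ _ _), hc⟩

lemma perm_of_dualList_ne_zero {l l' : List L} (h : dualList (R := R) l l' ≠ 0) :
    l'.Perm l := by
  induction l generalizing l' with
  | nil => simp_all [dualList, Pi.single_apply]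
  | cons x l ih =>
    obtain ⟨l'', hl, hc⟩ := exists_perm_of_wedge_ne_zero h
    exact hl.trans ((ih hc).cons x)

end Cochains

section Periodic

variable {R M : Type*} [CommRing R] [AddCommGroup M] [Module R M]

/-- The operators `σ - 1` and `1 + σ + ⋯ + σ ^ (p - 1)`, alternating with the parity of `n`. -/
noncomputable def periodicOp (p : ℕ) (σ : Module.End R M) (n : ℕ) : Module.End R M :=
  if Even n then σ - 1 else ∑ i ∈ Finset.range p, σ ^ i

lemma periodicOp_mul_succ {p : ℕ} {σ : Module.End R M} (hσ : σ ^ p = 1) (n : ℕ) :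
    periodicOp p σ (n + 1) * periodicOp p σ n = 0 := by
  by_cases hn : Even n
  · simp [periodicOp, hn, Nat.even_add_one, geom_sum_mul, hσ]
  · simp [periodicOp, hn, Nat.even_add_one, mul_geom_sum, hσ]

lemma periodicOp_add_two (p : ℕ) (σ : Module.End R M) (n : ℕ) :
    periodicOp p σ (n + 2) = periodicOp p σ n := by
  simp [periodicOp, Nat.even_add]

lemma periodicOp_map {M' : Type*} [AddCommGroup M'] [Module R M'] {p : ℕ}
    {σ : Module.End R M} {σ' : Module.End R M'} {φ : M →ₗ[R] M'} {S : Submodule R M}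
    (hS : ∀ x ∈ S, σ x ∈ S) (h : ∀ x ∈ S, φ (σ x) = σ' (φ x)) (n : ℕ) {x : M} (hx : x ∈ S) :
    φ (periodicOp p σ n x) = periodicOp p σ' n (φ x) := by
  have hpow (i : ℕ) : (σ ^ i) x ∈ S ∧ φ ((σ ^ i) x) = (σ' ^ i) (φ x) := by
    induction i with
    | zero => simpa using hx
    | succ i ih =>
      simp only [pow_succ', Module.End.mul_apply]
      exact ⟨hS _ ih.1, by rw [h _ ih.1, ih.2]⟩
  unfold periodicOp
  split_ifs
  · simp [h x hx]
  · simp [fun i => (hpow i).2]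

lemma periodicOp_mem {p : ℕ} {σ : Module.End R M} {S : Submodule R M}
    (hS : ∀ x ∈ S, σ x ∈ S) (n : ℕ) {x : M} (hx : x ∈ S) : periodicOp p σ n x ∈ S := by
  have hpow (i : ℕ) : (σ ^ i) x ∈ S := by
    induction i with
    | zero => simpa using hx
    | succ i ih =>
      simp only [pow_succ', Module.End.mul_apply]
      exact hS _ ih
  unfold periodicOp
  split_ifs
  · exact S.sub_mem (hS x hx) hx
  · simpa using S.sum_mem fun i _ => hpow i

/-- Exactness of the periodic complex on a submodule which is free over the cyclic group,
as witnessed by projections `π j` onto a decomposition permuted by `σ`. -/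
lemma exists_periodicOp_eq {p : ℕ} {σ : Module.End R M} (hσ : σ ^ p = 1)
    {S : Submodule R M} (hS : ∀ x ∈ S, σ x ∈ S) (π : ZMod p → Module.End R M)
    (hπS : ∀ j, ∀ x ∈ S, π j x ∈ S) (hπ : ∀ j, ∀ x ∈ S, σ (π j x) = π (j + 1) (σ x))
    (hsum : ∀ x ∈ S, ∑ j ∈ Finset.range p, π (j : ZMod p) x = x) (n : ℕ) {x : M} (hx : x ∈ S)
    (h0 : periodicOp p σ n x = 0) : ∃ y ∈ S, periodicOp p σ (n + 1) y = x := by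
  have hpowS (i : ℕ) {y : M} (hy : y ∈ S) : (σ ^ i) y ∈ S := by
    induction i with
    | zero => simpa using hy
    | succ i ih =>
      simp only [pow_succ', Module.End.mul_apply]
      exact hS _ ih
  have hpowπ (i : ℕ) (j : ZMod p) {y : M} (hy : y ∈ S) :
      (σ ^ i) (π j y) = π (j + i) ((σ ^ i) y) := by
    induction i with
    | zero => simp
    | succ i ih =>
      simp only [pow_succ', Module.End.mul_apply, ih, hπ _ _ (hpowS i hy)]
      push_cast
      rw [add_assoc]
  by_cases hn : Even n
  · have hfix : σ x = x := by
      rw [← sub_eq_zero]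
      simpa [periodicOp, hn] using h0
    have hfix' (i : ℕ) : (σ ^ i) x = x := by
      induction i with
      | zero => simp
      | succ i ih => simp [pow_succ', ih, hfix]
    refine ⟨π 0 x, hπS 0 x hx, ?_⟩
    simp only [periodicOp, Nat.even_add_one, hn, not_true_eq_false, if_false,
      LinearMap.sum_apply, hpowπ _ _ hx, hfix', zero_add]
    exact hsum x hx
  · have hN : ∑ i ∈ Finset.range p, (σ ^ i) x = 0 := by
      simpa [periodicOp, hn] using h0
    refine ⟨∑ j ∈ Finset.range p,
      (∑ i ∈ Finset.range j, σ ^ i) ((σ ^ (p - j)) (π (j : ZMod p) x)), ?_, ?_⟩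
    · refine S.sum_mem fun j _ => ?_
      rw [LinearMap.sum_apply]
      exact S.sum_mem fun i _ => hpowS _ (hpowS _ (hπS _ _ hx))
    · have h1 (j : ℕ) (hj : j ∈ Finset.range p) :
          (σ - 1) ((∑ i ∈ Finset.range j, σ ^ i) ((σ ^ (p - j)) (π (j : ZMod p) x))) =
            π (j : ZMod p) x - π 0 ((σ ^ (p - j)) x) := by
        have hj' : j ≤ p := (Finset.mem_range.1 hj).le
        rw [← Module.End.mul_apply (σ - 1), mul_geom_sum, LinearMap.sub_apply,
          Module.End.one_apply, ← Module.End.mul_apply, ← pow_add, Nat.add_sub_cancel' hj', hσ,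
          Module.End.one_apply, hpowπ _ _ hx]
        rw [Nat.cast_sub hj']
        simp
      have h2 : ∑ j ∈ Finset.range p, (σ ^ (p - j)) x = 0 := by
        rw [← Finset.sum_range_reflect, ← map_zero σ, ← hN, map_sum]
        refine Finset.sum_congr rfl fun j hj => ?_
        have := Finset.mem_range.1 hj
        rw [← Module.End.mul_apply, ← pow_succ', show p - (p - 1 - j) = j + 1 by omega]
      simp only [periodicOp, Nat.even_add_one, hn, not_false_eq_true, if_true, map_sum]
      rw [Finset.sum_congr rfl h1, Finset.sum_sub_distrib, hsum x hx, ← map_sum, h2]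
      simp

end Periodic

section CyclicLabels

variable {R J : Type*} [CommRing R] {p : ℕ}

/-- The cyclic shift of labels in `J × ZMod p`. -/
def labelShift (J : Type*) (p : ℕ) : Equiv.Perm (J × ZMod p) :=
  (Equiv.refl J).prodCongr (Equiv.addRight 1)

lemma relabel_labelShift_pow : relabel (R := R) (labelShift J p) ^ p = 1 := by
  have h (i : ℕ) (c : List (J × ZMod p) → R) (l : List (J × ZMod p)) :
      (relabel (labelShift J p) ^ i) c l = c (l.map fun a => (a.1, a.2 - i)) := by
    induction i generalizing l with
    | zero => simp
    | succ i ih =>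
      rw [pow_succ', Module.End.mul_apply]
      change (relabel (labelShift J p) ^ i) c (l.map (labelShift J p).symm) = _
      rw [ih, List.map_map]
      congr 2
      ext a <;> simp [labelShift]
      ring
  ext c l
  simp [h]

/-- Homogeneous alternating functions on lists of labels, supported on lists with distinct
first components. -/
def altSubmodule (R J : Type*) [CommRing R] (p n : ℕ) : Submodule R (List (J × ZMod p) → R) where
  carrier := {c | IsAlt c ∧ ∀ l, c l ≠ 0 → (l.map Prod.fst).Nodup ∧ l.length = n}
  zero_mem' := ⟨fun _ => by simp, by simp⟩
  add_mem' {c c'} h h' := by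
    refine ⟨fun u a b v => ?_, fun l hl => ?_⟩
    · simp only [Pi.add_apply, h.1 u a b v, h'.1 u a b v]
      ring
    · by_cases h0 : c l = 0
      · exact h'.2 l (by simpa [h0] using hl)
      · exact h.2 l h0
  smul_mem' r c h := by
    refine ⟨fun u a b v => ?_, fun l hl => h.2 l (right_ne_zero_of_mul hl)⟩
    simp [h.1 u a b v]

lemma altBoundary_mem [Fintype J] [NeZero p] {n : ℕ} {c : List (J × ZMod p) → R}
    (hc : c ∈ altSubmodule R J p (n + 1)) : altBoundary c ∈ altSubmodule R J p n := by
  refine ⟨fun u a b v => ?_, fun l hl => ?_⟩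
  · simp only [altBoundary, LinearMap.coe_mk, AddHom.coe_mk, ← Finset.sum_neg_distrib]
    exact Finset.sum_congr rfl fun e _ => hc.1 (e :: u) a b v
  · obtain ⟨a, -, ha⟩ := Finset.exists_ne_zero_of_sum_ne_zero hl
    have := hc.2 _ ha
    simp_all

lemma relabel_labelShift_mem {n : ℕ} {c : List (J × ZMod p) → R}
    (hc : c ∈ altSubmodule R J p n) : relabel (labelShift J p) c ∈ altSubmodule R J p n := by
  refine ⟨fun u a b v => ?_, fun l hl => ?_⟩
  · simpa [relabel, LinearMap.funLeft] using hc.1 (u.map _) _ _ (v.map _)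
  · have := hc.2 _ hl
    simpa [labelShift, Function.comp_def] using this

lemma dualList_mem [DecidableEq J] (h2 : IsUnit (2 : R)) {l : List (J × ZMod p)}
    (hl : ∀ a ∈ l, ∀ b ∈ l, a.1 = b.1 → a.2 = b.2) :
    dualList l ∈ altSubmodule R J p l.length := by
  refine ⟨isAlt_dualList l, fun l' h => ?_⟩
  have hp := perm_of_dualList_ne_zero h
  refine ⟨?_, hp.length_eq⟩
  refine List.Nodup.map_on (fun a ha b hb hab => ?_) ((isAlt_dualList l).nodup h2 h)
  exact Prod.ext hab (hl a (hp.mem_iff.1 ha) b (hp.mem_iff.1 hb) hab)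

variable [LinearOrder J]

/-- `a` is a label of `l` with the smallest first component. -/
def IsLowestLabel (l : List (J × ZMod p)) (a : J × ZMod p) : Prop :=
  a ∈ l ∧ ∀ b ∈ l, a.1 ≤ b.1

open Classical in
/-- The part of a function on lists whose lowest label has second component `j`. -/
noncomputable def lowestPart (j : ZMod p) : Module.End R (List (J × ZMod p) → R) where
  toFun c l := if ∃ a, IsLowestLabel l a ∧ a.2 = j then c l else 0
  map_add' c c' := by ext l; simp only [Pi.add_apply]; split_ifs <;> simp
  map_smul' r c := by ext l; simp

lemma lowestPart_mem {n : ℕ} (j : ZMod p) {c : List (J × ZMod p) → R}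
    (hc : c ∈ altSubmodule R J p n) : lowestPart j c ∈ altSubmodule R J p n := by
  refine ⟨fun u a b v => ?_, fun l hl => hc.2 l ?_⟩
  · have h (e) : IsLowestLabel (u ++ a :: b :: v) e ↔ IsLowestLabel (u ++ b :: a :: v) e := by
      have hp : (u ++ a :: b :: v).Perm (u ++ b :: a :: v) := (List.Perm.swap _ _ _).append_left u
      simp only [IsLowestLabel, hp.mem_iff]
    have h' : (∃ e, IsLowestLabel (u ++ a :: b :: v) e ∧ e.2 = j) ↔
        ∃ e, IsLowestLabel (u ++ b :: a :: v) e ∧ e.2 = j := by simp only [h]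
    simp only [lowestPart, LinearMap.coe_mk, AddHom.coe_mk, hc.1 u a b v]
    classical rw [if_congr h' rfl rfl]
    split_ifs <;> simp
  · intro h
    simp [lowestPart, h] at hl

lemma relabel_lowestPart (j : ZMod p) (c : List (J × ZMod p) → R) :
    relabel (labelShift J p) (lowestPart j c) =
      lowestPart (j + 1) (relabel (labelShift J p) c) := by
  ext l
  have h : (∃ a, IsLowestLabel (l.map (labelShift J p).symm) a ∧ a.2 = j) ↔
      ∃ a, IsLowestLabel l a ∧ a.2 = j + 1 := by
    rw [(labelShift J p).exists_congr_left]
    refine exists_congr fun a => ?_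
    have hmem : (labelShift J p).symm a ∈ l.map (labelShift J p).symm ↔ a ∈ l :=
      List.mem_map_of_injective (labelShift J p).symm.injective
    simp only [IsLowestLabel, hmem, List.forall_mem_map]
    simp [labelShift, ← sub_eq_add_neg, sub_eq_iff_eq_add]
  classical exact if_congr h rfl rfl

lemma sum_lowestPart [NeZero p] {n : ℕ} {c : List (J × ZMod p) → R}
    (hc : c ∈ altSubmodule R J p (n + 1)) :
    ∑ j ∈ Finset.range p, lowestPart (j : ZMod p) c = c := by
  ext l
  rw [Finset.sum_apply]
  by_cases h0 : c l = 0
  · simp [lowestPart, h0]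
  obtain ⟨hnd, hlen⟩ := hc.2 l h0
  obtain ⟨a, ha⟩ : ∃ a, IsLowestLabel l a := by
    have hne : l.toFinset.Nonempty := by
      rw [List.toFinset_nonempty_iff]
      rintro rfl
      simp at hlen
    simpa [IsLowestLabel] using Finset.exists_min_image l.toFinset Prod.fst hne
  have huniq (j : ZMod p) : (∃ b, IsLowestLabel l b ∧ b.2 = j) ↔ a.2 = j := by
    refine ⟨?_, fun h => ⟨a, ha, h⟩⟩
    rintro ⟨b, hb, rfl⟩
    have : a = b := List.inj_on_of_nodup_map hnd ha.1 hb.1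
      (le_antisymm (ha.2 b hb.1) (hb.2 a ha.1))
    rw [this]
  simp only [lowestPart, LinearMap.coe_mk, AddHom.coe_mk, huniq]
  rw [Finset.sum_eq_single (ZMod.val a.2)]
  · simp
  · intro j hj hja
    rw [if_neg]
    rintro h
    apply hja
    rw [h, ZMod.val_natCast_of_lt (Finset.mem_range.1 hj)]
  · intro h
    exact absurd (Finset.mem_range.2 (ZMod.val_lt _)) h

lemma exists_periodicOp_relabel_eq [NeZero p] {n : ℕ} (k : ℕ) {c : List (J × ZMod p) → R}
    (hc : c ∈ altSubmodule R J p (n + 1))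
    (h0 : periodicOp p (relabel (labelShift J p)) k c = 0) :
    ∃ c' ∈ altSubmodule R J p (n + 1),
      periodicOp p (relabel (labelShift J p)) (k + 1) c' = c :=
  exists_periodicOp_eq relabel_labelShift_pow (fun _ => relabel_labelShift_mem) lowestPart
    (fun j _ => lowestPart_mem j) (fun j c _ => relabel_lowestPart j c)
    (fun _ => sum_lowestPart) k hc h0

end CyclicLabels

section Towers

variable {R : Type*} [CommRing R] {E : Type*}

lemma map_mem_of_mem_supported {M : Type*} [AddCommGroup M] [Module R M]
    {φ : (List E →₀ R) →ₗ[R] M} {A : Set (List E)} {S : Submodule R M}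
    (h : ∀ l ∈ A, φ (Finsupp.single l 1) ∈ S) {c : List E →₀ R}
    (hc : c ∈ Finsupp.supported R R A) : φ c ∈ S := by
  rw [Finsupp.supported_eq_span_single] at hc
  have : Submodule.span R ((fun l => Finsupp.single l (1 : R)) '' A) ≤ S.comap φ :=
    Submodule.span_le.2 (by rintro _ ⟨l, hl, rfl⟩; exact h l hl)
  exact this hc

lemma eq_of_mem_supported {M : Type*} [AddCommGroup M] [Module R M]
    {φ ψ : (List E →₀ R) →ₗ[R] M} {A : Set (List E)}
    (h : ∀ l ∈ A, φ (Finsupp.single l 1) = ψ (Finsupp.single l 1)) {c : List E →₀ R}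
    (hc : c ∈ Finsupp.supported R R A) : φ c = ψ c := by
  have := map_mem_of_mem_supported (φ := φ - ψ) (S := ⊥)
    (fun l hl => by simp [h l hl]) hc
  simpa [sub_eq_zero] using this

lemma chainMap_pow (s : E → E) (i : ℕ) :
    chainMap (R := R) s ^ i = chainMap s^[i] := by
  induction i with
  | zero =>
    ext l : 2
    simp
  | succ i ih =>
    refine LinearMap.ext fun c => chain_hom_ext (fun l => ?_) c
    rw [pow_succ', ih, Function.iterate_succ']
    simp

/-- The lists of length `n` in `X` whose entries are pairwise at distance less than `ε`. -/
def smallLists [PseudoMetricSpace E] (X : Set E) (ε : ℝ) (n : ℕ) : Set (List E) :=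
  {l | l.length = n ∧ ∀ x ∈ l, x ∈ X ∧ ∀ y ∈ l, dist x y < ε}

lemma listPrism_mem_supported (f g : E → E) (l : List E) :
    listPrism f g l ∈ Finsupp.supported R R
      {l' | l'.length = l.length + 1 ∧ ∀ x ∈ l', ∃ y ∈ l, x = f y ∨ x = g y} := by
  induction l with
  | nil => exact Submodule.zero_mem _
  | cons a l ih =>
    refine Submodule.sub_mem _ ?_ ?_
    · rw [consChain_single]
      refine Finsupp.single_mem_supported R _ ⟨by simp, fun x hx => ?_⟩
      simp only [List.mem_cons, List.mem_map] at hx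
      rcases hx with h | h | ⟨y, hy, rfl⟩
      · exact ⟨a, by simp, Or.inl h⟩
      · exact ⟨a, by simp, Or.inr h⟩
      · exact ⟨y, by simp [hy], Or.inr rfl⟩
    · refine map_mem_of_mem_supported (fun l' hl' => ?_) ih
      rw [consChain_single]
      refine Finsupp.single_mem_supported R _ ⟨by simp [hl'.1], fun x hx => ?_⟩
      rcases List.mem_cons.1 hx with rfl | hx
      · exact ⟨a, by simp, Or.inl rfl⟩
      · obtain ⟨y, hy, h⟩ := hl'.2 x hx
        exact ⟨y, by simp [hy], h⟩

/-- A small cycle can be filled by a small chain in a cone over its support. -/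
lemma exists_chainBoundary_eq [NormedAddCommGroup E] [NormedSpace ℝ E] {X Y : Set E}
    (hX : Bornology.IsBounded X) {e : E} (he : e ∈ Y)
    (hXY : ∀ x ∈ X, ∀ r ∈ Set.Icc (0 : ℝ) 1, (1 - r) • x + r • e ∈ Y) {ε : ℝ} (hε : 0 < ε)
    {n : ℕ} {z : List E →₀ R} (hz : z ∈ Finsupp.supported R R (smallLists X (ε / 2) n))
    (hbd : chainBoundary z = 0) :
    ∃ w ∈ Finsupp.supported R R (smallLists Y ε (n + 1)), chainBoundary w = z := by
  obtain ⟨B, hB⟩ := (Metric.isBounded_iff_subset_closedBall e).1 hX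
  obtain ⟨M, hM⟩ := exists_nat_gt (max 0 (B / (ε / 2)))
  have hM0 : (0 : ℝ) < M := (le_max_left _ _).trans_lt hM
  have hMB : B / M < ε / 2 := by
    have := (le_max_right _ _).trans_lt hM
    rw [div_lt_iff₀ (by positivity)] at this ⊢
    linarith
  set φ : ℕ → E → E := fun j x => (1 - (j / M : ℝ)) • x + (j / M : ℝ) • e with hφ
  have hmem {j : ℕ} (hj : j ≤ M) : (j / M : ℝ) ∈ Set.Icc (0 : ℝ) 1 := by
    refine ⟨by positivity, (div_le_one hM0).2 (by exact_mod_cast hj)⟩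
  have hφ0 : φ 0 = id := by ext x; simp [hφ]
  have hφM (x : E) : φ M x = e := by simp [hφ, div_self hM0.ne']
  have hcontr {j : ℕ} (hj : j ≤ M) (x y : E) : dist (φ j x) (φ j y) ≤ dist x y := by
    have := hmem hj
    have h : φ j x - φ j y = (1 - (j / M : ℝ)) • (x - y) := by simp only [hφ]; module
    rw [dist_eq_norm, dist_eq_norm, h, norm_smul, Real.norm_of_nonneg (by linarith [this.2])]
    exact mul_le_of_le_one_left (norm_nonneg _) (by linarith [this.1])
  have hstep (j : ℕ) {x : E} (hx : x ∈ X) : dist (φ j x) (φ (j + 1) x) < ε / 2 := by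
    have h : φ j x - φ (j + 1) x = (1 / M : ℝ) • (x - e) := by
      simp only [hφ, Nat.cast_add, Nat.cast_one, add_div]; module
    rw [dist_eq_norm, h, norm_smul, Real.norm_of_nonneg (by positivity), ← dist_eq_norm]
    refine lt_of_le_of_lt ?_ hMB
    rw [one_div, inv_mul_eq_div]
    gcongr
    exact hB hx
  refine ⟨consChain e (chainMap (φ M) z) -
    ∑ j ∈ Finset.range M, chainPrism (φ j) (φ (j + 1)) z, ?_, ?_⟩
  · refine Submodule.sub_mem _ ?_ (Submodule.sum_mem _ fun j hj => ?_)
    · refine map_mem_of_mem_supported (φ := consChain e ∘ₗ chainMap (φ M)) (fun l hl => ?_) hz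
      simp only [LinearMap.comp_apply, chainMap_single, consChain_single]
      refine Finsupp.single_mem_supported R _ ⟨by simp [hl.1], ?_⟩
      have hall : ∀ x ∈ e :: l.map (φ M), x = e := by simp [hφM]
      exact fun x hx => ⟨hall x hx ▸ he, fun y hy => by
        rwa [hall x hx, hall y hy, dist_self]⟩
    · refine map_mem_of_mem_supported (fun l hl => ?_) hz
      rw [chainPrism_single]
      refine Finsupp.supported_mono ?_ (listPrism_mem_supported _ _ l)
      have hj' := Finset.mem_range.1 hj
      rintro l' ⟨hlen, hl'⟩
      refine ⟨by rw [hlen, hl.1], fun x hx => ⟨?_, fun y hy => ?_⟩⟩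
      · obtain ⟨y, hy, rfl | rfl⟩ := hl' x hx
        · exact hXY y (hl.2 y hy).1 _ (hmem hj'.le)
        · exact hXY y (hl.2 y hy).1 _ (hmem hj')
      · obtain ⟨x, hx, hx'⟩ := hl' x hx
        obtain ⟨y, hy, hy'⟩ := hl' y hy
        have hd := (hl.2 x hx).2 y hy
        have h1 := hcontr hj'.le x y
        have h2 := hcontr hj' x y
        have hsx := hstep j (hl.2 x hx).1
        have hsy := hstep j (hl.2 y hy).1
        rcases hx' with rfl | rfl <;> rcases hy' with rfl | rfl
        · linarith
        · linarith [dist_triangle (φ j x) (φ j y) (φ (j + 1) y)]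
        · rw [dist_comm] at hsx
          linarith [dist_triangle (φ (j + 1) x) (φ j x) (φ j y)]
        · linarith
  · simp only [map_sub, map_sum, chainBoundary_consChain, chainBoundary_chainMap, hbd, map_zero,
      chainBoundary_chainPrism, sub_zero]
    rw [Finset.sum_range_sub (fun j => chainMap (φ j) z), hφ0]
    have : chainMap (id : E → E) z = z := by simp [chainMap, Finsupp.lmapDomain_id]
    rw [this]
    abel

/-- A chain obtained from a vertex by successively filling its images under the operators
`periodicOp`. -/
def IsPeriodicChain [PseudoMetricSpace E] (p : ℕ) (s : E → E) (X : ℕ → Set E) (ε : ℝ) :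
    ℕ → (List E →₀ R) → Prop
  | 0, h => ∃ x ∈ X 0, h = Finsupp.single [x] 1
  | n + 1, h => h ∈ Finsupp.supported R R (smallLists (X (n + 1)) ε (n + 2)) ∧
      ∃ h', IsPeriodicChain p s X ε n h' ∧ chainBoundary h = periodicOp p (chainMap s) n h'

lemma smallLists_mono [PseudoMetricSpace E] {X : Set E} {ε ε' : ℝ} (h : ε ≤ ε') (n : ℕ) :
    smallLists X ε n ⊆ smallLists X ε' n :=
  fun _ hl => ⟨hl.1, fun x hx => ⟨(hl.2 x hx).1, fun y hy => ((hl.2 x hx).2 y hy).trans_le h⟩⟩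

lemma IsPeriodicChain.mono [PseudoMetricSpace E] {p : ℕ} {s : E → E} {X : ℕ → Set E} {ε ε' : ℝ}
    (hε : ε ≤ ε') {n : ℕ} {h : List E →₀ R} (hh : IsPeriodicChain p s X ε n h) :
    IsPeriodicChain p s X ε' n h := by
  induction n generalizing h with
  | zero => exact hh
  | succ n ih =>
    obtain ⟨h1, h', h2, h3⟩ := hh
    exact ⟨Finsupp.supported_mono (smallLists_mono hε _) h1, h', ih h2, h3⟩

lemma IsPeriodicChain.mem_supported [PseudoMetricSpace E] {p : ℕ} {s : E → E} {X : ℕ → Set E}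
    {ε : ℝ} (hε : 0 < ε) {n : ℕ} {h : List E →₀ R} (hh : IsPeriodicChain p s X ε n h) :
    h ∈ Finsupp.supported R R (smallLists (X n) ε (n + 1)) := by
  cases n with
  | zero =>
    obtain ⟨x, hx, rfl⟩ := hh
    exact Finsupp.single_mem_supported R _ ⟨rfl, by simp [hx, hε]⟩
  | succ n => exact hh.1

lemma chainBoundary_periodicOp (p : ℕ) (s : E → E) (n : ℕ) (c : List E →₀ R) :
    chainBoundary (periodicOp p (chainMap s) n c) =
      periodicOp p (chainMap s) n (chainBoundary c) :=
  periodicOp_map (S := ⊤) (fun _ _ => trivial) (fun c _ => chainBoundary_chainMap s c) n trivial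

lemma exists_isPeriodicChain [NormedAddCommGroup E] [NormedSpace ℝ E] {p : ℕ} {s : E → E}
    (hs : Isometry s) (hsp : s^[p] = id) {X : ℕ → Set E} (hX0 : (X 0).Nonempty)
    (hXb : ∀ n, Bornology.IsBounded (X n)) (hXs : ∀ n, ∀ x ∈ X n, s x ∈ X n) (v : ℕ → E)
    (hv : ∀ n, v n ∈ X (n + 1))
    (hXv : ∀ n, ∀ x ∈ X n, ∀ r ∈ Set.Icc (0 : ℝ) 1, (1 - r) • x + r • v n ∈ X (n + 1))
    (n : ℕ) {ε : ℝ} (hε : 0 < ε) : ∃ h : List E →₀ R, IsPeriodicChain p s X ε n h := by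
  have hpow : chainMap (R := R) s ^ p = 1 := by
    rw [chainMap_pow, hsp]
    simp [chainMap, Finsupp.lmapDomain_id, Module.End.one_eq_id]
  induction n generalizing ε with
  | zero =>
    obtain ⟨x, hx⟩ := hX0
    exact ⟨_, x, hx, rfl⟩
  | succ n ih =>
    obtain ⟨h', hh'⟩ := ih (half_pos hε)
    have hcycle : chainBoundary (periodicOp p (chainMap s) n h') = 0 := by
      cases n with
      | zero =>
        obtain ⟨x, -, rfl⟩ := hh'
        simp [periodicOp, listBoundary]
      | succ n =>
        obtain ⟨-, h'', -, hb⟩ := hh'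
        rw [chainBoundary_periodicOp, hb, ← Module.End.mul_apply, periodicOp_mul_succ hpow,
          LinearMap.zero_apply]
    have hsupp : periodicOp p (chainMap s) n h' ∈
        Finsupp.supported R R (smallLists (X n) (ε / 2) (n + 1)) := by
      refine periodicOp_mem (fun c hc => ?_) n (hh'.mem_supported (half_pos hε))
      refine map_mem_of_mem_supported (fun l hl => ?_) hc
      rw [chainMap_single]
      refine Finsupp.single_mem_supported R _ ⟨by simp [hl.1], ?_⟩
      simp only [List.mem_map, forall_exists_index, and_imp, forall_apply_eq_imp_iff₂,
        hs.dist_eq]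
      exact fun x hx => ⟨hXs n x (hl.2 x hx).1, (hl.2 x hx).2⟩
    obtain ⟨w, hw, hbw⟩ := exists_chainBoundary_eq (hXb n) (hv n) (hXv n) hε hsupp hcycle
    exact ⟨w, hw, h', hh'.mono (by linarith), hbw⟩

/-- A `ℤ/p`-analogue of Tucker's lemma. -/
lemma IsPeriodicChain.false_of_labelling [PseudoMetricSpace E] {p : ℕ} [Fact p.Prime]
    (hp2 : p ≠ 2) {N : ℕ} {s : E → E} {X : ℕ → Set E} (hX : Monotone X)
    {ε : ℝ} (hε : 0 < ε) {h : List E →₀ ZMod p} (hh : IsPeriodicChain p s X ε N h)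
    (lam : E → Fin N × ZMod p) (hs : ∀ x ∈ X N, lam (s x) = labelShift (Fin N) p (lam x))
    (hXs : ∀ x ∈ X N, s x ∈ X N) (hsd : Isometry s)
    (hlam : ∀ x ∈ X N, ∀ y ∈ X N, dist x y < ε → (lam x).1 = (lam y).1 →
      (lam x).2 = (lam y).2) : False := by
  have h2 : IsUnit (2 : ZMod p) := by
    rw [isUnit_iff_ne_zero]
    exact Ring.two_ne_zero (by rwa [ZMod.ringChar_zmod_n])
  set σ := relabel (R := ZMod p) (labelShift (Fin N) p)
  have hmem {n : ℕ} {c : List E →₀ ZMod p}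
      (hc : c ∈ Finsupp.supported (ZMod p) (ZMod p) (smallLists (X N) ε n)) :
      labelChain lam c ∈ altSubmodule (ZMod p) (Fin N) p n := by
    refine map_mem_of_mem_supported (fun l hl => ?_) hc
    rw [labelChain_single]
    have := dualList_mem (R := ZMod p) h2 (l := l.map lam) (by
      simp only [List.mem_map, forall_exists_index, and_imp, forall_apply_eq_imp_iff₂]
      exact fun x hx y hy => hlam x (hl.2 x hx).1 y (hl.2 y hy).1 ((hl.2 x hx).2 y hy))
    simpa [hl.1] using this
  have hequiv (k : ℕ) {n : ℕ} {c : List E →₀ ZMod p}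
      (hc : c ∈ Finsupp.supported (ZMod p) (ZMod p) (smallLists (X N) ε n)) :
      labelChain lam (periodicOp p (chainMap s) k c) = periodicOp p σ k (labelChain lam c) := by
    refine periodicOp_map (S := Finsupp.supported (ZMod p) (ZMod p) (smallLists (X N) ε n))
      (fun c hc => ?_) (fun c hc => ?_) k hc
    · refine map_mem_of_mem_supported (fun l hl => ?_) hc
      rw [chainMap_single]
      refine Finsupp.single_mem_supported _ _ ⟨by simp [hl.1], ?_⟩
      simp only [List.mem_map, forall_exists_index, and_imp, forall_apply_eq_imp_iff₂,
        hsd.dist_eq]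
      exact fun x hx => ⟨hXs x (hl.2 x hx).1, (hl.2 x hx).2⟩
    · refine eq_of_mem_supported (φ := labelChain lam ∘ₗ chainMap s) (ψ := σ ∘ₗ labelChain lam)
        (fun l hl => ?_) hc
      simp only [LinearMap.comp_apply, chainMap_single, labelChain_single, σ,
        ← dualList_relabel, List.map_map]
      congr 1
      exact List.map_congr_left fun x hx => hs x (hl.2 x hx).1
  have hcomm (k : ℕ) (c : List (Fin N × ZMod p) → ZMod p) :
      altBoundary (periodicOp p σ k c) = periodicOp p σ k (altBoundary c) :=
    periodicOp_map (S := ⊤) (fun _ _ => trivial) (fun c _ => altBoundary_relabel _ c) k trivial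
  have key (n : ℕ) (hn : n ≤ N) {h : List E →₀ ZMod p} (hh : IsPeriodicChain p s X ε n h)
      {c c' : List (Fin N × ZMod p) → ZMod p} (hc : IsAlt c)
      (hc' : c' ∈ altSubmodule (ZMod p) (Fin N) p (n + 1))
      (heq : labelChain lam h = altBoundary c + periodicOp p σ (n + 1) c') : False := by
    induction n generalizing h c c' with
    | zero =>
      obtain ⟨x, -, rfl⟩ := hh
      have h0 := congrFun (congrArg altBoundary heq) []
      rw [altBoundary_labelChain, map_add, hc.altBoundary_altBoundary h2, hcomm] at h0
      have hpow (i : ℕ) (d : List (Fin N × ZMod p) → ZMod p) : (σ ^ i) d [] = d [] := by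
        induction i with
        | zero => simp
        | succ i ih =>
          rw [pow_succ', Module.End.mul_apply, ← ih]
          rfl
      simp [listBoundary, periodicOp, dualList, hpow] at h0
    | succ n ih =>
      obtain ⟨hsupp, h', hh', hb⟩ := hh
      have hsupp' : h' ∈ Finsupp.supported (ZMod p) (ZMod p) (smallLists (X N) ε (n + 1)) := by
        have hsub : smallLists (X n) ε (n + 1) ⊆ smallLists (X N) ε (n + 1) := fun l hl =>
          ⟨hl.1, fun x hx => ⟨hX (by omega) (hl.2 x hx).1, (hl.2 x hx).2⟩⟩
        exact Finsupp.supported_mono hsub (hh'.mem_supported hε)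
      have h0 : periodicOp p σ n (labelChain lam h' - altBoundary c') = 0 := by
        have := congrArg altBoundary heq
        rw [altBoundary_labelChain, hb, hequiv n hsupp', map_add,
          hc.altBoundary_altBoundary h2, hcomm, periodicOp_add_two, zero_add] at this
        rw [map_sub, this, sub_self]
      obtain ⟨d, hd, hd'⟩ := exists_periodicOp_relabel_eq n
        (Submodule.sub_mem _ (hmem hsupp') (altBoundary_mem hc')) h0
      exact ih (by omega) hh' hc'.1 hd (by rw [hd']; abel)
  have hzero : labelChain lam h = 0 := by
    ext l
    by_contra hl
    obtain ⟨h1, h2⟩ := (hmem (hh.mem_supported hε)).2 l hl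
    have := h1.length_le_card
    simp [h2] at this
  exact key N le_rfl hh (c := 0) (c' := 0) (fun _ => by simp) (Submodule.zero_mem _)
    (by simp [hzero])

end Towers

section Joins

variable {E ι : Type*} [NormedAddCommGroup E] [NormedSpace ℝ E]

/-- The image in `E` of the join of the first `n + 1` of the families of vertices `v i`. -/
def joinSet (v : ℕ → ι → E) : ℕ → Set E
  | 0 => Set.range (v 0)
  | n + 1 => ⋃ g, (fun q : E × ℝ => (1 - q.2) • q.1 + q.2 • v (n + 1) g) ''
      (joinSet v n ×ˢ Set.Icc (0 : ℝ) 1)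

lemma mem_joinSet_succ {v : ℕ → ι → E} {n : ℕ} {y : E} :
    y ∈ joinSet v (n + 1) ↔ ∃ g, ∃ x ∈ joinSet v n, ∃ r ∈ Set.Icc (0 : ℝ) 1,
      (1 - r) • x + r • v (n + 1) g = y := by
  simp only [joinSet, Set.mem_iUnion, Set.mem_image, Set.mem_prod, Prod.exists]
  grind

lemma isCompact_joinSet [Finite ι] (v : ℕ → ι → E) (n : ℕ) : IsCompact (joinSet v n) := by
  induction n with
  | zero => exact (Set.finite_range _).isCompact
  | succ n ih =>
    exact isCompact_iUnion fun g => (ih.prod isCompact_Icc).image (by fun_prop)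

lemma joinSet_nonempty [Nonempty ι] (v : ℕ → ι → E) : (joinSet v 0).Nonempty :=
  Set.range_nonempty _

lemma joinSet_mono [Nonempty ι] (v : ℕ → ι → E) : Monotone (joinSet v) := by
  refine monotone_nat_of_le_succ fun n x hx => ?_
  exact mem_joinSet_succ.2 ⟨Classical.arbitrary ι, x, hx, 0, by simp, by simp⟩

lemma vertex_mem_joinSet_succ [Nonempty ι] (v : ℕ → ι → E) (n : ℕ) (g : ι) :
    v (n + 1) g ∈ joinSet v (n + 1) := by
  obtain ⟨x, hx⟩ := joinSet_nonempty v
  exact mem_joinSet_succ.2 ⟨g, x, joinSet_mono v n.zero_le hx, 1, by simp, by simp⟩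

lemma map_mem_joinSet {v : ℕ → ι → E} {s : E →ₗ[ℝ] E} {τ : ι → ι}
    (h : ∀ n g, s (v n g) = v n (τ g)) (n : ℕ) {x : E} (hx : x ∈ joinSet v n) :
    s x ∈ joinSet v n := by
  induction n generalizing x with
  | zero =>
    obtain ⟨g, rfl⟩ := hx
    exact ⟨τ g, (h 0 g).symm⟩
  | succ n ih =>
    obtain ⟨g, x', hx', r, hr, rfl⟩ := mem_joinSet_succ.1 hx
    exact mem_joinSet_succ.2 ⟨τ g, s x', ih hx', r, hr, by simp [h]⟩

end Joins

section Labelling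

variable {E T : Type*} {p : ℕ}

/-- The points where all values of `y` on `A` exceed all values off `A`. -/
def cutSet (y : ZMod p → E → ℝ) (A : Finset (ZMod p)) : Set E :=
  {x | ∀ a ∈ A, ∀ b ∉ A, y b x < y a x}

lemma isOpen_cutSet [TopologicalSpace E] [NeZero p] {y : ZMod p → E → ℝ}
    (hy : ∀ a, Continuous (y a)) (A : Finset (ZMod p)) :
    IsOpen (cutSet y A) := by
  have : cutSet y A = ⋂ a, ⋂ (_ : a ∈ A), ⋂ b, ⋂ (_ : b ∉ A), {x | y b x < y a x} := by
    ext x; simp [cutSet]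
  rw [this]
  exact isOpen_iInter_of_finite fun a => isOpen_iInter_of_finite fun _ =>
    isOpen_iInter_of_finite fun b => isOpen_iInter_of_finite fun _ =>
      isOpen_lt (hy b) (hy a)

lemma eq_of_mem_cutSet {y : ZMod p → E → ℝ} {A B : Finset (ZMod p)} (hAB : A.card = B.card)
    {x : E} (hA : x ∈ cutSet y A) (hB : x ∈ cutSet y B) : A = B := by
  by_contra hne
  have h1 : ¬ A ⊆ B := fun h => hne (Finset.eq_of_subset_of_card_le h hAB.ge)
  have h2 : ¬ B ⊆ A := fun h => hne (Finset.eq_of_subset_of_card_le h hAB.le).symm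
  obtain ⟨a, ha, ha'⟩ := Finset.not_subset.1 h1
  obtain ⟨b, hb, hb'⟩ := Finset.not_subset.1 h2
  exact lt_asymm (hA a ha b hb') (hB b hb a ha')

/-- The translate of a subset of `ZMod p` by `1`. -/
def shiftFinset (A : Finset (ZMod p)) : Finset (ZMod p) :=
  A.map (Equiv.addRight 1).toEmbedding

lemma exists_shiftFinset_eq (A : Finset (ZMod p)) : ∃ B, shiftFinset B = A :=
  ⟨A.map (Equiv.addRight (1 : ZMod p)).symm.toEmbedding, by
    rw [shiftFinset, Finset.map_map]
    convert Finset.map_refl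
    ext a
    simp⟩

lemma mem_cutSet_shiftFinset {y : ZMod p → E → ℝ} {s : E → E} (hys : ∀ a x, y (a + 1) (s x) = y a x)
    {A : Finset (ZMod p)} {x : E} : s x ∈ cutSet y (shiftFinset A) ↔ x ∈ cutSet y A := by
  have hmem (a : ZMod p) : a + 1 ∈ shiftFinset A ↔ a ∈ A := by simp [shiftFinset]
  have hsurj : Function.Surjective fun a : ZMod p => a + 1 := (Equiv.addRight 1).surjective
  simp only [cutSet, Set.mem_ofPred_eq]
  rw [hsurj.forall]
  refine forall_congr' fun a => ?_
  rw [hmem, hsurj.forall]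
  simp only [hmem, hys]

lemma exists_mem_cutSet [NeZero p] {y : ZMod p → E → ℝ} {x : E} {a b : ZMod p} (h : y a x ≠ y b x) :
    ∃ A : Finset (ZMod p), A.Nonempty ∧ A ≠ Finset.univ ∧ x ∈ cutSet y A := by
  obtain ⟨m, -, hm⟩ := Finset.exists_max_image Finset.univ (fun a => y a x) ⟨a, Finset.mem_univ a⟩
  refine ⟨Finset.univ.filter fun c => y c x = y m x, ⟨m, by simp⟩, fun hu => h ?_, ?_⟩
  · have ha := Finset.mem_univ a
    have hb := Finset.mem_univ b
    rw [← hu] at ha hb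
    simp only [Finset.mem_filter_univ] at ha hb
    rw [ha, hb]
  · intro c hc e he
    simp only [Finset.mem_filter_univ] at hc he
    rw [hc]
    exact lt_of_le_of_ne (hm e (Finset.mem_univ e)) he

/-- An equivariant family of functions without a common point of constancy on a compact set
induces an equivariant labelling which is locally constant for each type of label. -/
lemma exists_labelling [MetricSpace E] [Fact p.Prime] [Nonempty T] {K : Set E}
    (hK : IsCompact K) (s : E ≃ᵢ E)
    (hsK : ∀ x ∈ K, s x ∈ K) {y : T → ZMod p → E → ℝ} (hy : ∀ t a, Continuous (y t a))
    (hys : ∀ t a x, y t (a + 1) (s x) = y t a x)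
    (hne : ∀ x ∈ K, ∃ t a b, y t a x ≠ y t b x) :
    ∃ ε > 0, ∃ lam : E → (T × Fin (p - 1)) × ZMod p,
      (∀ x ∈ K, lam (s x) = labelShift _ p (lam x)) ∧
      ∀ x ∈ K, ∀ x' ∈ K, dist x x' < ε → (lam x).1 = (lam x').1 → (lam x).2 = (lam x').2 := by
  have hp := (Fact.out : p.Prime).two_le
  have : Nonempty (Fin (p - 1)) := ⟨⟨0, by omega⟩⟩
  obtain ⟨ε, hε, hball⟩ := lebesgue_number_lemma_of_metric
    (c := fun q : {q : T × Finset (ZMod p) // q.2.Nonempty ∧ q.2 ≠ Finset.univ} =>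
      cutSet (y q.1.1) q.1.2) hK (fun q => isOpen_cutSet (hy _) _) (fun x hx => by
        obtain ⟨t, a, b, h⟩ := hne x hx
        obtain ⟨A, h1, h2, h3⟩ := exists_mem_cutSet h
        exact Set.mem_iUnion.2 ⟨⟨(t, A), h1, h2⟩, h3⟩)
  let P (x : E) (q : T × Fin (p - 1)) (A : Finset (ZMod p)) : Prop :=
    A.card = q.2 + 1 ∧ Metric.ball x ε ⊆ cutSet (y q.1) A
  have hPs (x q A) : P (s x) q (shiftFinset A) ↔ P x q A := by
    simp only [P, shiftFinset, Finset.card_map]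
    refine and_congr_right fun _ => ?_
    rw [← s.image_ball, Set.image_subset_iff]
    exact forall₂_congr fun z _ => mem_cutSet_shiftFinset (hys q.1)
  have hPq (x : E) (hx : x ∈ K) : ∃ q A, P x q A := by
    obtain ⟨⟨⟨t, A⟩, h1, h2⟩, h3⟩ := hball x hx
    have hc := Finset.card_lt_card (Finset.ssubset_univ_iff.2 h2)
    rw [Finset.card_univ, ZMod.card] at hc
    simp only at hc h1
    have h1' := h1.card_pos
    exact ⟨(t, ⟨A.card - 1, by omega⟩), A, by simp only; omega, h3⟩
  let q (x : E) : T × Fin (p - 1) := Classical.epsilon fun q => ∃ A, P x q A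
  let A (x : E) : Finset (ZMod p) := Classical.epsilon fun A => P x (q x) A
  have hA (x : E) (hx : x ∈ K) : P x (q x) (A x) :=
    Classical.epsilon_spec (p := fun A => P x (q x) A)
      (Classical.epsilon_spec (p := fun q => ∃ A, P x q A) (hPq x hx))
  have hqs (x : E) : q (s x) = q x := by
    have : (fun q => ∃ A, P (s x) q A) = fun q => ∃ A, P x q A := by
      ext q
      constructor
      · rintro ⟨A, h⟩
        obtain ⟨B, rfl⟩ := exists_shiftFinset_eq A
        exact ⟨B, (hPs x q B).1 h⟩
      · rintro ⟨A, h⟩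
        exact ⟨_, (hPs x q A).2 h⟩
    simp only [q, this]
  refine ⟨ε, hε, fun x => (q x, (∑ a ∈ A x, a) / (A x).card), fun x hx => ?_,
    fun x hx x' hx' hd h => ?_⟩
  · have h1 := (hPs x _ _).2 (hA x hx)
    have h2 := hA (s x) (hsK x hx)
    rw [hqs] at h2
    have hAs : A (s x) = shiftFinset (A x) := eq_of_mem_cutSet (h2.1.trans h1.1.symm)
      (h2.2 (Metric.mem_ball_self hε)) (h1.2 (Metric.mem_ball_self hε))
    have hcard : ((A x).card : ZMod p) ≠ 0 := by
      have h3 := (hA x hx).1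
      have h4 := (q x).2.isLt
      rw [Ne, ZMod.natCast_eq_zero_iff]
      exact Nat.not_dvd_of_pos_of_lt (by omega) (by omega)
    refine Prod.ext (hqs x) ?_
    simp only [hAs, shiftFinset, labelShift, Finset.card_map, Finset.sum_map]
    simp [Finset.sum_add_distrib, add_div, hcard]
  · simp only at h ⊢
    have h1 := hA x hx
    have h2 := hA x' hx'
    rw [← h] at h2
    rw [eq_of_mem_cutSet (h1.1.trans h2.1.symm) (h1.2 (Metric.mem_ball_self hε)) (h2.2 hd)]

end Labelling

section Metrics

lemma IsMetricEquivToStd.continuous {E : Type*} [TopologicalSpace E] {ρ : E → E → ℝ}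
    (h : IsMetricEquivToStd ρ) : Continuous fun q : E × E => ρ q.1 q.2 := by
  obtain ⟨hsymm, hzero, htri, hopen⟩ := h
  have hball (x : E) {ε : ℝ} (hε : 0 < ε) : ∀ᶠ y in nhds x, ρ x y < ε := by
    refine IsOpen.mem_nhds (s := {y | ρ x y < ε}) ((hopen _).2 fun y hy => ?_) ?_
    · refine ⟨ε - ρ x y, sub_pos.2 hy, fun z hz => ?_⟩
      have hz' : ρ y z < ε - ρ x y := hz
      change ρ x z < ε
      linarith [htri x y z]
    · change ρ x x < ε
      rwa [(hzero x x).2 rfl]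
  refine continuous_iff_continuousAt.2 fun ⟨x, y⟩ => Metric.tendsto_nhds.2 fun ε hε => ?_
  rw [nhds_prod_eq]
  filter_upwards [(hball x (half_pos hε)).prod_mk (hball y (half_pos hε))] with ⟨x', y'⟩ ⟨hx, hy⟩
  simp only at hx hy
  rw [Real.dist_eq, abs_lt]
  constructor
  · linarith [htri x x' y, htri x' y' y, hsymm y y']
  · linarith [htri x' x y', htri x y y', hsymm x x']

/-- Equilateral polygons for all steps have distinct vertices unless all vertices coincide. -/
lemma injective_of_equilateral {p : ℕ} [Fact p.Prime] (hodd : Odd p) {E : Type*}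
    [TopologicalSpace E] {ρ : ℕ → E → E → ℝ}
    (hρ : ∀ t, 1 ≤ t → t ≤ (p - 1) / 2 → IsMetricEquivToStd (ρ t)) {x : ZMod p → E}
    (hx : ∀ t, 1 ≤ t → t ≤ (p - 1) / 2 → ∀ a b : ZMod p,
      ρ t (x a) (x (a + t)) = ρ t (x b) (x (b + t)))
    (hconst : ¬ ∀ k, x k = x 0) : Function.Injective x := by
  intro i j hij
  by_contra hne
  apply hconst
  have hu : j - i ≠ 0 := sub_ne_zero.2 (Ne.symm hne)
  set t := (j - i).valMinAbs.natAbs with ht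
  have ht1 : 1 ≤ t := by
    rw [Nat.one_le_iff_ne_zero, ht, Int.natAbs_ne_zero]
    simpa using hu
  have ht2 : t ≤ (p - 1) / 2 := by
    have := ZMod.natAbs_valMinAbs_le (j - i)
    obtain ⟨m, hm⟩ := hodd
    omega
  obtain ⟨-, hzero, -⟩ := hρ t ht1 ht2
  have hsign : (t : ZMod p) = j - i ∨ (t : ZMod p) = -(j - i) := by
    have h := ZMod.coe_valMinAbs (j - i)
    rcases Int.natAbs_eq (j - i).valMinAbs with h' | h' <;> rw [← ht] at h' <;>
      rw [h'] at h <;> simp only [Int.cast_neg, Int.cast_natCast] at h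
    · exact Or.inl h
    · exact Or.inr (by rw [← h, neg_neg])
  have hedge : ∃ a, x a = x (a + t) := by
    rcases hsign with h | h
    · exact ⟨i, by rw [h, hij]; congr 1; ring⟩
    · exact ⟨j, by rw [h, ← hij]; congr 1; ring⟩
  obtain ⟨a, ha⟩ := hedge
  have hstep (b : ZMod p) : x (b + t) = x b := by
    refine ((hzero _ _).1 ?_).symm
    rw [hx t ht1 ht2 b a, (hzero _ _).2 ha]
  have ht0 : (t : ZMod p) ≠ 0 := by
    rcases hsign with h | h <;> rw [h]
    · exact hu
    · exact neg_ne_zero.2 hu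
  have hmul (m : ℕ) : x (m * t) = x 0 := by
    induction m with
    | zero => simp
    | succ m ih => rw [Nat.cast_succ, add_mul, one_mul, hstep, ih]
  intro k
  have := hmul (k / t).val
  rwa [ZMod.natCast_zmod_val, div_mul_cancel₀ _ ht0] at this

end Metrics

section Configurations

variable {p d : ℕ} [Fact p.Prime]

/-- The cyclic shift of configurations. -/
noncomputable def configShift (p d : ℕ) [Fact p.Prime] :
    (ZMod p → EuclideanSpace ℝ (Fin d)) →ₗ[ℝ] (ZMod p → EuclideanSpace ℝ (Fin d)) :=
  LinearMap.funLeft ℝ _ fun k => k - 1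

/-- The cyclic shift of configurations as an isometry. -/
noncomputable def configShiftIsometry (p d : ℕ) [Fact p.Prime] :
    (ZMod p → EuclideanSpace ℝ (Fin d)) ≃ᵢ (ZMod p → EuclideanSpace ℝ (Fin d)) :=
  IsometryEquiv.mk' (configShift p d) (fun x k => x (k + 1))
    (fun x => by ext k : 1; simp [configShift, LinearMap.funLeft])
    (Isometry.of_dist_eq fun x y => by
      refine le_antisymm ((dist_pi_le_iff dist_nonneg).2 fun k => dist_le_pi_dist x y (k - 1))
        ((dist_pi_le_iff dist_nonneg).2 fun k => ?_)
      simpa [configShift, LinearMap.funLeft] using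
        dist_le_pi_dist (configShift p d x) (configShift p d y) (k + 1))

/-- The configuration whose point with index `g` is a standard basis vector, each basis vector
being used for `p - 1` values of `n`, and whose other points are zero. -/
noncomputable def configVertex (p : ℕ) [Fact p.Prime] (hd : 0 < d) (n : ℕ) (g : ZMod p) :
    ZMod p → EuclideanSpace ℝ (Fin d) :=
  Pi.single g (EuclideanSpace.single
    (if h : n / (p - 1) < d then ⟨n / (p - 1), h⟩ else ⟨0, hd⟩) 1)

lemma configShift_configVertex (hd : 0 < d) (n : ℕ) (g : ZMod p) :
    configShift p d (configVertex p hd n g) = configVertex p hd n (g + 1) := by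
  ext k : 1
  simp [configShift, LinearMap.funLeft, configVertex, Pi.single_apply, sub_eq_iff_eq_add]

lemma configShift_iterate : (configShift p d)^[p] = id := by
  have h (i : ℕ) (x : ZMod p → EuclideanSpace ℝ (Fin d)) (k : ZMod p) :
      (configShift p d)^[i] x k = x (k - i) := by
    induction i generalizing k with
    | zero => simp
    | succ i ih =>
      rw [Function.iterate_succ_apply']
      change (configShift p d)^[i] x (k - 1) = _
      rw [ih]
      congr 1
      push_cast
      ring
  ext x k : 2
  simp [h]

lemma sum_joinSet_configVertex (hd : 0 < d) (n : ℕ) {x : ZMod p → EuclideanSpace ℝ (Fin d)}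
    (hx : x ∈ joinSet (configVertex p hd) n) : ∑ k, ∑ j, x k j = 1 := by
  have hv (n g) : ∑ k, ∑ j, configVertex p hd n g k j = 1 := by
    rw [Finset.sum_eq_single g (fun k _ hk => by simp [configVertex, hk]) (by simp)]
    simp [configVertex]
  induction n generalizing x with
  | zero =>
    obtain ⟨g, rfl⟩ := hx
    exact hv 0 g
  | succ n ih =>
    obtain ⟨g, y, hy, r, -, rfl⟩ := mem_joinSet_succ.1 hx
    simp only [Pi.add_apply, Pi.smul_apply, PiLp.add_apply, PiLp.smul_apply, smul_eq_mul,
      Finset.sum_add_distrib, ← Finset.mul_sum, ih hy, hv]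
    ring

lemma exists_support_joinSet_configVertex (hd : 0 < d) (n : ℕ) (hn : n / (p - 1) < d)
    {x : ZMod p → EuclideanSpace ℝ (Fin d)} (hx : x ∈ joinSet (configVertex p hd) n) :
    ∃ γ : ℕ → ZMod p, ∀ k j, x k j ≠ 0 → ∃ i ≤ n, i / (p - 1) = j ∧ γ i = k := by
  have hv (n g) (hn : n / (p - 1) < d) (k j) (h : configVertex p hd n g k j ≠ 0) :
      n / (p - 1) = j ∧ g = k := by
    by_cases hk : k = g
    · subst hk
      simp only [configVertex, hn, dite_true, Pi.single_eq_same, PiLp.single_apply, ne_eq,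
        ite_eq_right_iff, one_ne_zero, imp_false, not_not] at h
      simp [h]
    · simp [configVertex, hk] at h
  induction n generalizing x with
  | zero =>
    obtain ⟨g, rfl⟩ := hx
    exact ⟨fun _ => g, fun k j h => ⟨0, le_rfl, hv 0 g hn k j h⟩⟩
  | succ n ih =>
    obtain ⟨g, y, hy, r, -, rfl⟩ := mem_joinSet_succ.1 hx
    obtain ⟨γ, hγ⟩ := ih ((Nat.div_le_div_right n.le_succ).trans_lt hn) hy
    refine ⟨Function.update γ (n + 1) g, fun k j h => ?_⟩
    by_cases hyk : y k j = 0
    · have : configVertex p hd (n + 1) g k j ≠ 0 := by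
        intro h0
        simp [hyk, h0] at h
      obtain ⟨h1, h2⟩ := hv _ g hn k j this
      exact ⟨n + 1, le_rfl, h1, by simp [h2]⟩
    · obtain ⟨i, hi, h1, h2⟩ := hγ k j hyk
      exact ⟨i, by omega, h1, by rw [Function.update_of_ne (by omega), h2]⟩

lemma not_const_of_mem_joinSet_configVertex (hd : 0 < d) (n : ℕ) (hn : n / (p - 1) < d)
    {x : ZMod p → EuclideanSpace ℝ (Fin d)} (hx : x ∈ joinSet (configVertex p hd) n) :
    ¬ ∀ k, x k = x 0 := by
  intro hconst
  have hp := (Fact.out : p.Prime).two_le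
  obtain ⟨γ, hγ⟩ := exists_support_joinSet_configVertex hd n hn hx
  have hzero (j : Fin d) : x 0 j = 0 := by
    by_contra h
    have hsub : (Finset.univ : Finset (ZMod p)) ⊆
        (Finset.Ico (j * (p - 1)) ((j + 1) * (p - 1))).image γ := by
      intro k _
      obtain ⟨i, -, hi, hik⟩ := hγ k j (by rwa [hconst k])
      refine Finset.mem_image.2 ⟨i, Finset.mem_Ico.2 ?_, hik⟩
      rw [← hi]
      exact ⟨Nat.div_mul_le_self _ _, Nat.lt_mul_of_div_lt (Nat.lt_succ_self _) (by omega)⟩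
    have := (Finset.card_le_card hsub).trans Finset.card_image_le
    rw [Finset.card_univ, ZMod.card, Nat.card_Ico, ← Nat.sub_mul] at this
    simp at this
    omega
  have := sum_joinSet_configVertex hd n hx
  simp [fun k => hconst k, hzero] at this

end Configurations

/-- Corollary: for `d > (p-1)/2` and metrics `ρ₁, …, ρ_{(p-1)/2}` equivalent to the
Euclidean metric, there are `p` distinct points such that each `p`-gon `C_t` is
`ρ_t`-equilateral. -/
theorem exists_pgons_each_equilateral
    (p d : ℕ) (hp : p.Prime) (hodd : Odd p) (hd : 0 < d) (hdr : d > (p - 1) / 2)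
    (ρ : ℕ → EuclideanSpace ℝ (Fin d) → EuclideanSpace ℝ (Fin d) → ℝ)
    (hρ : ∀ t, 1 ≤ t → t ≤ (p - 1) / 2 → IsMetricEquivToStd (ρ t)) :
    ∃ x : ZMod p → EuclideanSpace ℝ (Fin d),
      Function.Injective x ∧
      ∀ t : ℕ, 1 ≤ t → t ≤ (p - 1) / 2 →
        ∀ k : ZMod p,
          ρ t (x (k * (t : ZMod p))) (x ((k + 1) * (t : ZMod p))) =
            ρ t (x 0) (x (t : ZMod p)) := by
  have := Fact.mk hp
  have hp2 : p ≠ 2 := by rintro rfl; exact absurd hodd (by decide)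
  have hp3 : 3 ≤ p := by have := hp.two_le; omega
  set N := (p - 1) / 2 * (p - 1) with hN
  have hNd : N / (p - 1) < d := by rwa [hN, Nat.mul_div_cancel _ (by omega)]
  set X := joinSet (configVertex p hd)
  by_cases hex : ∃ x ∈ X N, ∀ t, 1 ≤ t → t ≤ (p - 1) / 2 → ∀ a b : ZMod p,
      ρ t (x a) (x (a + t)) = ρ t (x b) (x (b + t))
  · obtain ⟨x, hx, heq⟩ := hex
    refine ⟨x, injective_of_equilateral hodd hρ heq
      (not_const_of_mem_joinSet_configVertex hd N hNd hx), fun t ht1 ht2 k => ?_⟩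
    have := heq t ht1 ht2 (k * t) 0
    rwa [zero_add, ← add_one_mul] at this
  exfalso
  have : Nonempty (Fin ((p - 1) / 2)) := ⟨⟨0, by omega⟩⟩
  have hXs (n : ℕ) (x) (hx : x ∈ X n) : configShift p d x ∈ X n :=
    map_mem_joinSet (configShift_configVertex hd) n hx
  obtain ⟨ε, hε, lam, hlam, hlam'⟩ := exists_labelling
    (isCompact_joinSet (configVertex p hd) N) (configShiftIsometry p d) (hXs N)
    (y := fun (t : Fin ((p - 1) / 2)) a x => ρ (t + 1) (x a) (x (a + ((t + 1 : ℕ) : ZMod p))))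
    (fun t a => (hρ (t + 1) (by omega) (by omega)).continuous.comp
      (f := fun x : ZMod p → EuclideanSpace ℝ (Fin d) => (x a, x (a + ((t + 1 : ℕ) : ZMod p))))
      (by fun_prop))
    (fun t a x => by
      change ρ _ (x (a + 1 - 1)) (x (a + 1 + _ - 1)) = _
      congr 2 <;> ring)
    (fun x hx => by
      push Not at hex
      obtain ⟨t, ht1, ht2, a, b, h⟩ := hex x hx
      refine ⟨⟨t - 1, by omega⟩, a, b, ?_⟩
      simpa only [Nat.sub_add_cancel ht1] using h)
  obtain ⟨h, hh⟩ := exists_isPeriodicChain (R := ZMod p) (p := p)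
    (configShiftIsometry p d).isometry configShift_iterate (joinSet_nonempty (configVertex p hd))
    (fun n => (isCompact_joinSet _ n).isBounded) hXs (fun n => configVertex p hd (n + 1) 0)
    (fun n => vertex_mem_joinSet_succ _ n 0)
    (fun n x hx r hr => mem_joinSet_succ.2 ⟨0, x, hx, r, hr, rfl⟩) N hε
  refine hh.false_of_labelling hp2 (joinSet_mono _) hε
    (fun x => (finProdFinEquiv (lam x).1, (lam x).2)) (fun x hx => ?_) (hXs N)
    (configShiftIsometry p d).isometry (fun x hx x' hx' hd h => ?_)
  · have := hlam x hx
    change (finProdFinEquiv (lam (configShiftIsometry p d x)).1, _) = _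
    rw [this]
    rfl
  · exact hlam' x hx x' hx' hd (finProdFinEquiv.injective h)
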